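/- Carlson's theorem: if f is an entire function satisfying |f(z)| ≤ C·e^{α|z|} for all z (for some constants C and α < ∞), |f(iy)| ≤ C'·e^{β|y|} for all real y (for some β < π), and f(n) = 0 for every positive integer n, then f is identically zero. -/

import Mathlib

open Complex

/-!
On the right half-plane divide `f` by `s z = sin (π z) / z`. The quotient is holomorphic, and it is
again of exponential type: near a positive integer `n` the sine dominates `‖z - n‖`, and so, by the
Schwarz lemma, it controls `f`; away from the integers it is bounded below. On the imaginary axis
`s` grows like `exp (π * |y|) / |y|`, so there the quotient decays exponentially, at some rate
`δ > 0` below `π - β`.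

That decay leaves room to multiply the quotient by `(1 + z) ^ (-c z)` with `c * (π / 2) = δ`: the
product stays bounded on the imaginary axis and of exponential type, while it decays
superexponentially on the positive reals. The Phragmén–Lindelöf principle then makes it vanish.
-/

open Filter Set Asymptotics
open scoped Topology

/-- The damping factor `(1 + z) ^ (-c z)`, which on the right half-plane grows no faster than
`exp (c * (π / 2) * |im z|)` but decays superexponentially along the positive reals. The logarithm
is the principal one, which is holomorphic at `1 + z` for `0 ≤ re z`. -/
noncomputable def dampingFactor (c : ℝ) (z : ℂ) : ℂ :=
  exp (-(c * z * log (1 + z)))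

section Damping

variable {E : Type*} [NormedAddCommGroup E] [NormedSpace ℂ E] {c : ℝ} {z : ℂ}

theorem one_add_mem_slitPlane_of_re_nonneg (hz : 0 ≤ z.re) : 1 + z ∈ slitPlane :=
  Or.inl (by simpa using by linarith)

theorem differentiableAt_dampingFactor (c : ℝ) (hz : 0 ≤ z.re) :
    DifferentiableAt ℂ (dampingFactor c) z := by
  have hlog : DifferentiableAt ℂ (fun w : ℂ ↦ log (1 + w)) z :=
    (differentiableAt_id.const_add 1).clog (one_add_mem_slitPlane_of_re_nonneg hz)
  unfold dampingFactor
  fun_prop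

theorem diffContOnCl_dampingFactor (c : ℝ) : DiffContOnCl ℂ (dampingFactor c) {z | 0 < z.re} := by
  refine DifferentiableOn.diffContOnCl fun z hz ↦ ?_
  rw [closure_setOfPred_lt_re] at hz
  exact (differentiableAt_dampingFactor c hz).differentiableWithinAt

theorem norm_dampingFactor_le (hc : 0 ≤ c) (hz : 0 ≤ z.re) :
    ‖dampingFactor c z‖ ≤ Real.exp (c * (Real.pi / 2) * |z.im|) := by
  have hre : 1 ≤ (1 + z).re := by simpa using hz
  have hlog : 0 ≤ z.re * Real.log ‖1 + z‖ :=
    mul_nonneg hz (Real.log_nonneg (hre.trans (re_le_norm _)))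
  have harg : z.im * (1 + z).arg ≤ Real.pi / 2 * |z.im| := calc
    z.im * (1 + z).arg ≤ |z.im| * |(1 + z).arg| := (le_abs_self _).trans (abs_mul _ _).le
    _ ≤ |z.im| * (Real.pi / 2) := by gcongr; exact abs_arg_le_pi_div_two_iff.2 (by linarith)
    _ = Real.pi / 2 * |z.im| := mul_comm _ _
  have hexponent : (-(c * z * log (1 + z))).re =
      c * (z.im * (1 + z).arg - z.re * Real.log ‖1 + z‖) := by
    simp only [neg_re, mul_assoc, re_ofReal_mul, mul_re z, log_re, log_im]
    ring
  rw [dampingFactor, norm_exp, hexponent, mul_assoc]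
  gcongr
  linarith

theorem norm_dampingFactor_ofReal (c : ℝ) {x : ℝ} (hx : 0 ≤ x) :
    ‖dampingFactor c x‖ = Real.exp (-(c * x * Real.log (1 + x))) := by
  have hexponent : -(c * x * log (1 + x) : ℂ) = (-(c * x * Real.log (1 + x)) : ℝ) := by
    push_cast [ofReal_log (by positivity : 0 ≤ 1 + x)]
    rfl
  rw [dampingFactor, hexponent, norm_exp, ofReal_re]

theorem superpolynomialDecay_norm_dampingFactor (hc : 0 < c) :
    SuperpolynomialDecay atTop Real.exp fun x : ℝ ↦ ‖dampingFactor c x‖ := by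
  intro n
  have hlog : Tendsto (fun x : ℝ ↦ n - c * Real.log (1 + x)) atTop atBot :=
    tendsto_atBot_add_const_left _ _ <| tendsto_neg_atTop_atBot.comp <|
      (Real.tendsto_log_atTop.comp (tendsto_atTop_add_const_left _ 1 tendsto_id)).const_mul_atTop hc
  refine (Real.tendsto_exp_atBot.comp (tendsto_id.atTop_mul_atBot₀ hlog)).congr' ?_
  filter_upwards [eventually_ge_atTop 0] with x hx
  rw [norm_dampingFactor_ofReal c hx, ← Real.exp_nat_mul, ← Real.exp_add, Function.comp_apply, id]
  ring_nf

theorem superpolynomialDecay_norm_dampingFactor_smul (hc : 0 < c) {g : ℝ → E} {K A : ℝ}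
    (hg : ∀ x, 0 < x → ‖g x‖ ≤ K * Real.exp (A * x)) :
    SuperpolynomialDecay atTop Real.exp fun x : ℝ ↦ ‖dampingFactor c x • g x‖ := by
  have hdecay := ((superpolynomialDecay_norm_dampingFactor hc).const_mul K).mul_param_pow ⌈A⌉₊
  refine (superpolynomialDecay_zero _ _).trans_eventuallyLE
    (.of_forall fun x ↦ x.exp_nonneg) hdecay (.of_forall fun x ↦ norm_nonneg _) ?_
  filter_upwards [eventually_gt_atTop 0] with x hx
  have hK : 0 ≤ K := nonneg_of_mul_nonneg_left
    ((norm_nonneg _).trans (hg x hx)) (Real.exp_pos _)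
  calc ‖dampingFactor c x • g x‖ ≤ ‖dampingFactor c x‖ * (K * Real.exp (A * x)) := by
        rw [norm_smul]
        gcongr
        exact hg x hx
    _ ≤ ‖dampingFactor c x‖ * (K * Real.exp (⌈A⌉₊ * x)) := by
        gcongr
        exact Nat.le_ceil A
    _ = K * ‖dampingFactor c x‖ * Real.exp x ^ ⌈A⌉₊ := by
        rw [Real.exp_nat_mul]
        ring

theorem eqOn_zero_of_exponential_decay_on_imaginary_axis {F : ℂ → E} {K A M δ : ℝ}
    (hF : DiffContOnCl ℂ F {z | 0 < z.re})
    (hgrowth : ∀ z : ℂ, 0 < z.re → ‖F z‖ ≤ K * Real.exp (A * ‖z‖)) (hδ : 0 < δ)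
    (him : ∀ y : ℝ, ‖F (y * I)‖ ≤ M * Real.exp (-(δ * |y|))) :
    EqOn F 0 {z | 0 ≤ z.re} := by
  -- With this `c` the growth of the damping factor exactly matches the decay of `F`.
  set c := δ / (Real.pi / 2)
  have hc : 0 < c := by positivity
  have hcδ : c * (Real.pi / 2) = δ := div_mul_cancel₀ _ (by positivity)
  have hdamp (z : ℂ) (hz : 0 ≤ z.re) : ‖dampingFactor c z‖ ≤ Real.exp (δ * |z.im|) :=
    hcδ ▸ norm_dampingFactor_le hc.le hz
  have hgrowth_real (x : ℝ) (hx : 0 < x) : ‖F x‖ ≤ K * Real.exp (A * x) := by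
    simpa [abs_of_pos hx] using hgrowth x (by simpa)
  have hzero : EqOn (fun z ↦ dampingFactor c z • F z) 0 {z | 0 ≤ z.re} := by
    refine PhragmenLindelof.eq_zero_on_right_half_plane_of_superexponential_decay
      ((diffContOnCl_dampingFactor c).smul hF) ⟨1, one_lt_two, δ + A, IsBigO.of_bound K ?_⟩
      (superpolynomialDecay_norm_dampingFactor_smul hc hgrowth_real) ⟨M, fun y ↦ ?_⟩
    · filter_upwards [mem_inf_of_right (mem_principal_self _)] with z hz
      calc ‖dampingFactor c z • F z‖
          ≤ Real.exp (δ * ‖z‖) * (K * Real.exp (A * ‖z‖)) := by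
            rw [norm_smul]
            gcongr
            · exact (hdamp z (le_of_lt hz)).trans (by gcongr; exact abs_im_le_norm z)
            · exact hgrowth z hz
        _ = K * ‖Real.exp ((δ + A) * ‖z‖ ^ (1 : ℝ))‖ := by
            rw [Real.norm_eq_abs, Real.abs_exp, Real.rpow_one, add_mul, Real.exp_add]
            ring
    · calc ‖dampingFactor c (y * I) • F (y * I)‖
          ≤ Real.exp (δ * |y|) * (M * Real.exp (-(δ * |y|))) := by
            rw [norm_smul]
            gcongr
            · simpa using hdamp (y * I) (by simp)
            · exact him y
        _ = M := by
            rw [mul_left_comm, ← Real.exp_add, add_neg_cancel, Real.exp_zero, mul_one]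
  exact fun z hz ↦ (smul_eq_zero.1 (hzero hz)).resolve_left (exp_ne_zero _)

end Damping

theorem norm_sin_sq (z : ℂ) : ‖sin z‖ ^ 2 = Real.sin z.re ^ 2 + Real.sinh z.im ^ 2 := by
  have hsin : sin z = (Real.sin z.re * Real.cosh z.im : ℝ) +
      (Real.cos z.re * Real.sinh z.im : ℝ) * I := by
    push_cast
    exact sin_eq z
  rw [hsin, ← normSq_eq_norm_sq, normSq_add_mul_I]
  linear_combination Real.sin z.re ^ 2 * Real.cosh_sq z.im +
    Real.sinh z.im ^ 2 * Real.sin_sq_add_cos_sq z.re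

theorem two_div_pi_mul_norm_le_norm_sin {z : ℂ} (hz : |z.re| ≤ Real.pi / 2) :
    2 / Real.pi * ‖z‖ ≤ ‖sin z‖ := by
  have hπ : 2 / Real.pi ≤ 1 := (div_le_one Real.pi_pos).2 Real.two_le_pi
  have hre : (2 / Real.pi * |z.re|) ^ 2 ≤ Real.sin z.re ^ 2 := by
    rw [← sq_abs (Real.sin _)]
    gcongr
    exact Real.mul_abs_le_abs_sin hz
  have him : (2 / Real.pi * |z.im|) ^ 2 ≤ Real.sinh z.im ^ 2 := by
    rw [← sq_abs (Real.sinh _), Real.abs_sinh]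
    gcongr
    exact (mul_le_of_le_one_left (abs_nonneg _) hπ).trans
      (Real.self_le_sinh_iff.2 (abs_nonneg _))
  refine le_of_sq_le_sq ?_ (norm_nonneg _)
  calc (2 / Real.pi * ‖z‖) ^ 2 = (2 / Real.pi * |z.re|) ^ 2 + (2 / Real.pi * |z.im|) ^ 2 := by
        simp only [mul_pow, sq_abs, ← normSq_eq_norm_sq, normSq_apply]
        ring
    _ ≤ ‖sin z‖ ^ 2 := by
        rw [norm_sin_sq]
        gcongr

theorem two_mul_norm_sub_intCast_le_norm_sin_pi_mul {z : ℂ} {n : ℤ} (hz : |z.re - n| ≤ 1 / 2) :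
    2 * ‖z - n‖ ≤ ‖sin (Real.pi * z)‖ := by
  have hshift : ‖sin (Real.pi * (z - n))‖ = ‖sin (Real.pi * z)‖ := by
    rw [mul_sub, mul_comm (Real.pi : ℂ) n, sin_antiperiodic.sub_int_mul_eq, norm_mul]
    simp
  have hstrip : |(Real.pi * (z - n)).re| ≤ Real.pi / 2 := by
    rw [re_ofReal_mul, sub_re, intCast_re, abs_mul, abs_of_pos Real.pi_pos]
    linarith [mul_le_mul_of_nonneg_left hz Real.pi_pos.le]
  calc 2 * ‖z - n‖ = 2 / Real.pi * ‖Real.pi * (z - n)‖ := by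
        rw [norm_mul, norm_real, Real.norm_of_nonneg Real.pi_pos.le]
        field_simp
    _ ≤ ‖sin (Real.pi * z)‖ := hshift ▸ two_div_pi_mul_norm_le_norm_sin hstrip

/-- The entire function `sin (π z) / z`, whose zeros are the nonzero integers; `dslope` supplies the
value `π` at `0`. Dividing the sine by `z` accounts for `f` not being assumed to vanish at `0`. -/
noncomputable def sinPiDiv : ℂ → ℂ := dslope (fun z ↦ sin (Real.pi * z)) 0

theorem mul_sinPiDiv (z : ℂ) : z * sinPiDiv z = sin (Real.pi * z) := by
  simpa [sinPiDiv] using sub_smul_dslope (fun z : ℂ ↦ sin (Real.pi * z)) 0 z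

theorem sinPiDiv_zero : sinPiDiv 0 = Real.pi := by
  have hderiv : HasDerivAt (fun z : ℂ ↦ sin (Real.pi * z)) Real.pi 0 := by
    simpa using ((hasDerivAt_id' (0 : ℂ)).const_mul (Real.pi : ℂ)).csin
  rw [sinPiDiv, dslope_same, hderiv.deriv]

theorem differentiable_sinPiDiv : Differentiable ℂ sinPiDiv := by
  rw [← differentiableOn_univ]
  refine (differentiableOn_dslope univ_mem).2 (Differentiable.differentiableOn ?_)
  fun_prop

theorem eventually_sinPiDiv_ne_zero (z : ℂ) : ∀ᶠ w in 𝓝[≠] z, sinPiDiv w ≠ 0 := by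
  have hanalytic : AnalyticOnNhd ℂ sinPiDiv univ := fun w _ ↦ differentiable_sinPiDiv.analyticAt w
  by_contra hfreq
  have hzero := hanalytic.eqOn_zero_of_preconnected_of_frequently_eq_zero isPreconnected_univ
    (mem_univ z) (by simpa using hfreq)
  exact ofReal_ne_zero.2 Real.pi_ne_zero (sinPiDiv_zero.symm.trans (hzero (mem_univ 0)))

theorem mul_exp_le_mul_sinh (t : ℝ) : t * Real.exp t ≤ (1 + 2 * t) * Real.sinh t := by
  have hexp : (1 + 2 * t) * Real.exp (-t) ≤ Real.exp t := calc
    (1 + 2 * t) * Real.exp (-t) ≤ Real.exp (2 * t) * Real.exp (-t) := by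
      gcongr
      linarith [Real.add_one_le_exp (2 * t)]
    _ = Real.exp t := by
      rw [← Real.exp_add]
      ring_nf
  rw [Real.sinh_eq]
  linarith

theorem pi_mul_exp_le_norm_sinPiDiv_mul_I (y : ℝ) :
    Real.pi * Real.exp (Real.pi * |y|) ≤ (1 + 2 * (Real.pi * |y|)) * ‖sinPiDiv (y * I)‖ := by
  rcases eq_or_ne y 0 with rfl | hy
  · simp [sinPiDiv_zero, abs_of_pos Real.pi_pos]
  have hsinh : |y| * ‖sinPiDiv (y * I)‖ = Real.sinh (Real.pi * |y|) := calc
    |y| * ‖sinPiDiv (y * I)‖ = ‖y * I * sinPiDiv (y * I)‖ := by simp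
    _ = ‖(Real.sinh (Real.pi * y) : ℂ) * I‖ := by
      rw [mul_sinPiDiv, ← mul_assoc, sin_mul_I, ← ofReal_mul, ofReal_sinh]
    _ = Real.sinh (Real.pi * |y|) := by
      rw [norm_mul, norm_I, mul_one, norm_real, Real.norm_eq_abs, Real.abs_sinh, abs_mul,
        abs_of_pos Real.pi_pos]
  refine le_of_mul_le_mul_left ?_ (abs_pos.2 hy)
  calc |y| * (Real.pi * Real.exp (Real.pi * |y|))
      = Real.pi * |y| * Real.exp (Real.pi * |y|) := by ring
    _ ≤ (1 + 2 * (Real.pi * |y|)) * Real.sinh (Real.pi * |y|) := mul_exp_le_mul_sinh _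
    _ = |y| * ((1 + 2 * (Real.pi * |y|)) * ‖sinPiDiv (y * I)‖) := by rw [← hsinh]; ring

theorem exp_mul_abs_le_mul_norm_sinPiDiv_mul_I {δ : ℝ} (hδ : 0 < δ) (y : ℝ) :
    Real.exp ((Real.pi - δ) * |y|) ≤ (1 / Real.pi + 2 / δ) * ‖sinPiDiv (y * I)‖ := by
  have hlinear : 1 + 2 * (Real.pi * |y|) ≤ (1 + 2 * Real.pi / δ) * Real.exp (δ * |y|) := calc
    1 + 2 * (Real.pi * |y|) ≤ (1 + 2 * Real.pi / δ) * (1 + δ * |y|) := by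
      field_simp
      nlinarith [Real.pi_pos, mul_nonneg (sq_nonneg δ) (abs_nonneg y)]
    _ ≤ (1 + 2 * Real.pi / δ) * Real.exp (δ * |y|) := by
      gcongr
      linarith [Real.add_one_le_exp (δ * |y|)]
  have hlower : Real.pi * Real.exp (Real.pi * |y|) ≤
      (1 + 2 * Real.pi / δ) * Real.exp (δ * |y|) * ‖sinPiDiv (y * I)‖ :=
    (pi_mul_exp_le_norm_sinPiDiv_mul_I y).trans (by gcongr)
  calc Real.exp ((Real.pi - δ) * |y|)
      = Real.pi * Real.exp (Real.pi * |y|) / (Real.pi * Real.exp (δ * |y|)) := by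
        rw [sub_mul, Real.exp_sub]
        field_simp
    _ ≤ (1 + 2 * Real.pi / δ) * Real.exp (δ * |y|) * ‖sinPiDiv (y * I)‖ /
          (Real.pi * Real.exp (δ * |y|)) := by gcongr
    _ = (1 / Real.pi + 2 / δ) * ‖sinPiDiv (y * I)‖ := by field_simp

theorem sinPiDiv_mul_I_ne_zero (y : ℝ) : sinPiDiv (y * I) ≠ 0 := by
  intro hzero
  have hpos := (Real.exp_pos _).trans_le (exp_mul_abs_le_mul_norm_sinPiDiv_mul_I one_pos y)
  simp [hzero] at hpos

theorem exists_norm_sub_natCast_le_or_one_le_norm_sinPiDiv {z : ℂ} (hz : 0 < z.re) :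
    (∃ n : ℕ, 0 < n ∧ ‖z - n‖ < 1 ∧ ‖z - n‖ ≤ (‖z‖ + 1) * ‖sinPiDiv z‖) ∨
      1 ≤ (‖z‖ + 1) * ‖sinPiDiv z‖ := by
  have hround : 0 ≤ round z.re := by
    rw [round_eq]
    positivity
  obtain ⟨n, hn⟩ := Int.eq_ofNat_of_zero_le hround
  have hnear : |z.re - (n : ℤ)| ≤ 1 / 2 := hn ▸ abs_sub_round z.re
  have hsin : 2 * ‖z - n‖ ≤ ‖z‖ * ‖sinPiDiv z‖ := by
    rw [← norm_mul, mul_sinPiDiv]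
    exact_mod_cast two_mul_norm_sub_intCast_le_norm_sin_pi_mul hnear
  rcases Nat.eq_zero_or_pos n with rfl | hnpos
  · have htwo : 2 ≤ ‖sinPiDiv z‖ := le_of_mul_le_mul_left
      (by simpa [mul_comm] using hsin) (hz.trans_le (re_le_norm z))
    exact Or.inr (by nlinarith [norm_nonneg z])
  · rcases lt_or_ge ‖z - n‖ 1 with hlt | hge
    · exact Or.inl ⟨n, hnpos, hlt, by linarith [norm_nonneg (z - n), norm_nonneg (sinPiDiv z)]⟩
    · exact Or.inr (by linarith [norm_nonneg (sinPiDiv z)])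

/-- The quotient `f / s` with its removable singularities removed: at each zero of `s` it takes the
value of the limit there, which is a junk value unless that limit exists. -/
noncomputable def extendedQuotient {E : Type*} [NormedAddCommGroup E] [NormedSpace ℂ E]
    (f : ℂ → E) (s : ℂ → ℂ) (z : ℂ) : E :=
  if s z = 0 then limUnder (𝓝[≠] z) (fun w ↦ (s w)⁻¹ • f w) else (s z)⁻¹ • f z

section ExtendedQuotient

variable {E : Type*} [NormedAddCommGroup E] [NormedSpace ℂ E] {f : ℂ → E} {s : ℂ → ℂ} {c : ℂ}

theorem extendedQuotient_of_ne_zero (hc : s c ≠ 0) :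
    extendedQuotient f s c = (s c)⁻¹ • f c :=
  if_neg hc

theorem extendedQuotient_eventuallyEq (hs : ContinuousAt s c) (hc : s c ≠ 0) :
    extendedQuotient f s =ᶠ[𝓝 c] fun z ↦ (s z)⁻¹ • f z :=
  (hs.eventually_ne hc).mono fun _ ↦ extendedQuotient_of_ne_zero

theorem tendsto_extendedQuotient [CompleteSpace E] (hf : ∀ᶠ z in 𝓝[≠] c, DifferentiableAt ℂ f z)
    (hs : ∀ᶠ z in 𝓝[≠] c, DifferentiableAt ℂ s z) (hs0 : ∀ᶠ z in 𝓝[≠] c, s z ≠ 0)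
    (hfs : f =O[𝓝[≠] c] s) (hc : s c = 0) :
    Tendsto (extendedQuotient f s) (𝓝[≠] c) (𝓝 (extendedQuotient f s c)) := by
  have hbounded : (fun z ↦ (s z)⁻¹ • f z) =O[𝓝[≠] c] (1 : ℂ → ℝ) := by
    refine ((isBigO_refl (fun z ↦ (s z)⁻¹) _).smul hfs).trans (IsBigO.of_bound 1 ?_)
    filter_upwards [hs0] with z hz
    simp [hz]
  have hlim : Tendsto (fun z ↦ (s z)⁻¹ • f z) (𝓝[≠] c)
      (𝓝 (limUnder (𝓝[≠] c) fun z ↦ (s z)⁻¹ • f z)) := by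
    refine tendsto_limUnder_of_differentiable_on_punctured_nhds_of_bounded_under ?_
      (hbounded.sub (isBigO_const_const _ one_ne_zero _)).isBoundedUnder_le
    filter_upwards [hf, hs, hs0] with z hfz hsz hz using (hsz.inv hz).smul hfz
  have hvalue : extendedQuotient f s c = limUnder (𝓝[≠] c) fun z ↦ (s z)⁻¹ • f z := if_pos hc
  rw [hvalue]
  exact hlim.congr' (hs0.mono fun z hz ↦ (extendedQuotient_of_ne_zero hz).symm)

theorem differentiableAt_extendedQuotient [CompleteSpace E]
    (hf : ∀ᶠ z in 𝓝 c, DifferentiableAt ℂ f z) (hs : ∀ᶠ z in 𝓝 c, DifferentiableAt ℂ s z)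
    (hs0 : ∀ᶠ z in 𝓝[≠] c, s z ≠ 0) (hfs : f =O[𝓝[≠] c] s) :
    DifferentiableAt ℂ (extendedQuotient f s) c := by
  have of_ne_zero {z : ℂ} (hfz : DifferentiableAt ℂ f z) (hsz : DifferentiableAt ℂ s z)
      (hz : s z ≠ 0) : DifferentiableAt ℂ (extendedQuotient f s) z :=
    ((hsz.inv hz).smul hfz).congr_of_eventuallyEq
      (extendedQuotient_eventuallyEq hsz.continuousAt hz)
  by_cases hc : s c = 0
  · have hf' := hf.filter_mono (nhdsWithin_le_nhds (s := {c}ᶜ))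
    have hs' := hs.filter_mono (nhdsWithin_le_nhds (s := {c}ᶜ))
    refine (analyticAt_of_differentiable_on_punctured_nhds_of_continuousAt ?_
      (continuousAt_iff_punctured_nhds.2
        (tendsto_extendedQuotient hf' hs' hs0 hfs hc))).differentiableAt
    filter_upwards [hf', hs', hs0] with z hfz hsz hz using of_ne_zero hfz hsz hz
  · exact of_ne_zero hf.self_of_nhds hs.self_of_nhds hc

theorem norm_extendedQuotient_le {b : ℂ → ℝ}
    (hcont : ContinuousAt (extendedQuotient f s) c) (hb : ContinuousAt b c)
    (hs0 : ∀ᶠ z in 𝓝[≠] c, s z ≠ 0) (hfs : ∀ᶠ z in 𝓝[≠] c, ‖f z‖ ≤ b z * ‖s z‖) :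
    ‖extendedQuotient f s c‖ ≤ b c := by
  refine le_of_tendsto_of_tendsto (hcont.norm.mono_left (nhdsWithin_le_nhds (s := {c}ᶜ)))
    (hb.mono_left nhdsWithin_le_nhds) ?_
  filter_upwards [hs0, hfs] with z hz hfz
  rw [extendedQuotient_of_ne_zero hz, norm_smul, norm_inv, inv_mul_le_iff₀ (norm_pos_iff.2 hz),
    mul_comm]
  exact hfz

theorem diffContOnCl_extendedQuotient [CompleteSpace E] {U : Set ℂ} (hU : IsOpen U)
    (hf : DiffContOnCl ℂ f U) (hs : Differentiable ℂ s) (hs0 : ∀ z ∈ U, ∀ᶠ w in 𝓝[≠] z, s w ≠ 0)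
    (hfs : ∀ z ∈ U, f =O[𝓝[≠] z] s) (hfrontier : ∀ z ∈ frontier U, s z ≠ 0) :
    DiffContOnCl ℂ (extendedQuotient f s) U := by
  have hdiff (z : ℂ) (hz : z ∈ U) : DifferentiableAt ℂ (extendedQuotient f s) z := by
    refine differentiableAt_extendedQuotient ?_ (.of_forall hs) (hs0 z hz) (hfs z hz)
    filter_upwards [hU.mem_nhds hz] with w hw using hf.differentiableAt hU hw
  refine ⟨fun z hz ↦ (hdiff z hz).differentiableWithinAt, fun z hz ↦ ?_⟩
  by_cases hzU : z ∈ U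
  · exact (hdiff z hzU).continuousAt.continuousWithinAt
  · have hsz : s z ≠ 0 := hfrontier z (hU.frontier_eq ▸ ⟨hz, hzU⟩)
    have hcont := (hs.continuous.continuousAt.continuousWithinAt.inv₀ hsz).smul
      (hf.continuousOn z hz)
    exact hcont.congr_of_eventuallyEq
      ((extendedQuotient_eventuallyEq hs.continuous.continuousAt hsz).filter_mono
        nhdsWithin_le_nhds) (extendedQuotient_of_ne_zero hsz)

end ExtendedQuotient

section Carlson

variable {E : Type*} [NormedAddCommGroup E] [NormedSpace ℂ E] {f : ℂ → E} {C C' α β : ℝ}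

theorem ball_natCast_one_subset_re_pos {n : ℕ} (hn : 0 < n) :
    Metric.ball (n : ℂ) 1 ⊆ {w | 0 < w.re} := by
  intro w hw
  have hre : |w.re - n| < 1 := by
    simpa using (abs_re_le_norm _).trans_lt (mem_ball_iff_norm.1 hw)
  have hone : (1 : ℝ) ≤ n := mod_cast hn
  change 0 < w.re
  linarith [(abs_lt.1 hre).1]

theorem norm_le_mul_norm_sub_of_zero {c z : ℂ} (hf : DifferentiableOn ℂ f (Metric.ball c 1))
    (hα : 0 ≤ α) (hgrowth : ∀ w ∈ Metric.ball c 1, ‖f w‖ ≤ C * Real.exp (α * ‖w‖)) (hc : f c = 0)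
    (hz : z ∈ Metric.ball c 1) :
    ‖f z‖ ≤ C * Real.exp (α * (‖z‖ + 2)) * ‖z - c‖ := by
  have hmaps : MapsTo f (Metric.ball c 1)
      (Metric.closedBall (f c) (C * Real.exp (α * (‖z‖ + 2)))) := by
    intro w hw
    have hC : 0 ≤ C := nonneg_of_mul_nonneg_left
      ((norm_nonneg _).trans (hgrowth w hw)) (Real.exp_pos _)
    have hwz : ‖w‖ ≤ ‖z‖ + 2 := by
      have hdist : ‖w - z‖ ≤ dist w c + dist z c := dist_eq_norm w z ▸ dist_triangle_right w z c
      linarith [norm_le_norm_add_norm_sub' w z, Metric.mem_ball.1 hw, Metric.mem_ball.1 hz]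
    rw [hc, mem_closedBall_zero_iff]
    exact (hgrowth w hw).trans (by gcongr)
  simpa [hc, dist_eq_norm] using dist_le_div_mul_dist_of_mapsTo_ball hf hmaps hz

theorem norm_le_mul_norm_sinPiDiv {z : ℂ} (hf : DifferentiableOn ℂ f {w | 0 < w.re}) (hα : 0 ≤ α)
    (hgrowth : ∀ w : ℂ, 0 < w.re → ‖f w‖ ≤ C * Real.exp (α * ‖w‖))
    (hzero : ∀ n : ℕ, 0 < n → f n = 0) (hz : 0 < z.re) :
    ‖f z‖ ≤ C * Real.exp (2 * α) * Real.exp ((α + 1) * ‖z‖) * ‖sinPiDiv z‖ := by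
  have hC : 0 ≤ C := nonneg_of_mul_nonneg_left
    ((norm_nonneg _).trans (hgrowth z hz)) (Real.exp_pos _)
  have hlinear : ‖f z‖ ≤ C * Real.exp (α * (‖z‖ + 2)) * ((‖z‖ + 1) * ‖sinPiDiv z‖) := by
    rcases exists_norm_sub_natCast_le_or_one_le_norm_sinPiDiv hz with ⟨n, hn, hzn, hsin⟩ | hsin
    · have hball : Metric.ball (n : ℂ) 1 ⊆ {w | 0 < w.re} := ball_natCast_one_subset_re_pos hn
      exact (norm_le_mul_norm_sub_of_zero (hf.mono hball) hα (fun w hw ↦ hgrowth w (hball hw))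
        (hzero n hn) (mem_ball_iff_norm.2 hzn)).trans (by gcongr)
    · calc ‖f z‖ ≤ C * Real.exp (α * (‖z‖ + 2)) := (hgrowth z hz).trans (by gcongr; linarith)
        _ ≤ C * Real.exp (α * (‖z‖ + 2)) * ((‖z‖ + 1) * ‖sinPiDiv z‖) :=
          le_mul_of_one_le_right (by positivity) hsin
  calc ‖f z‖ ≤ C * Real.exp (α * (‖z‖ + 2)) * ((‖z‖ + 1) * ‖sinPiDiv z‖) := hlinear
    _ ≤ C * Real.exp (α * (‖z‖ + 2)) * (Real.exp ‖z‖ * ‖sinPiDiv z‖) := by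
        gcongr
        exact Real.add_one_le_exp _
    _ = C * Real.exp (2 * α) * Real.exp ((α + 1) * ‖z‖) * ‖sinPiDiv z‖ := by
        rw [show α * (‖z‖ + 2) = 2 * α + α * ‖z‖ by ring, add_mul, one_mul, Real.exp_add,
          Real.exp_add]
        ring

theorem diffContOnCl_extendedQuotient_sinPiDiv [CompleteSpace E] {b : ℂ → ℝ}
    (hf : DiffContOnCl ℂ f {z | 0 < z.re}) (hb : Continuous b)
    (hfb : ∀ z : ℂ, 0 < z.re → ‖f z‖ ≤ b z * ‖sinPiDiv z‖) :
    DiffContOnCl ℂ (extendedQuotient f sinPiDiv) {z | 0 < z.re} := by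
  have hopen : IsOpen {z : ℂ | 0 < z.re} := isOpen_lt continuous_const continuous_re
  refine diffContOnCl_extendedQuotient hopen hf differentiable_sinPiDiv
    (fun z _ ↦ eventually_sinPiDiv_ne_zero z) (fun z hz ↦ IsBigO.of_bound (b z + 1) ?_)
    fun z hz ↦ ?_
  · filter_upwards [nhdsWithin_le_nhds (hopen.mem_nhds hz), nhdsWithin_le_nhds
      (hb.continuousAt.eventually_le_const (lt_add_one (b z)))] with w hw hbw
    exact (hfb w hw).trans (by gcongr)
  · rw [frontier_setOfPred_lt_re] at hz
    have hzI : z = z.im * I := Complex.ext (by simpa using hz) (by simp)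
    exact hzI ▸ sinPiDiv_mul_I_ne_zero z.im

theorem norm_extendedQuotient_sinPiDiv_mul_I_le (hβπ : β < Real.pi)
    (him : ∀ y : ℝ, ‖f (y * I)‖ ≤ C' * Real.exp (β * |y|)) (y : ℝ) :
    ‖extendedQuotient f sinPiDiv (y * I)‖ ≤
      C' * (1 / Real.pi + 2 / ((Real.pi - β) / 2)) * Real.exp (-((Real.pi - β) / 2 * |y|)) := by
  set δ := (Real.pi - β) / 2 with hδ_def
  have hδ : 0 < δ := by linarith
  have hC' : 0 ≤ C' := nonneg_of_mul_nonneg_left ((norm_nonneg _).trans (him y)) (Real.exp_pos _)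
  have hs : 0 < ‖sinPiDiv (y * I)‖ := norm_pos_iff.2 (sinPiDiv_mul_I_ne_zero y)
  rw [extendedQuotient_of_ne_zero (sinPiDiv_mul_I_ne_zero y), norm_smul, norm_inv,
    inv_mul_le_iff₀ hs]
  calc ‖f (y * I)‖ ≤ C' * Real.exp (β * |y|) := him y
    _ = C' * Real.exp ((Real.pi - δ) * |y|) * Real.exp (-(δ * |y|)) := by
        rw [mul_assoc, ← Real.exp_add]
        congr 2
        rw [hδ_def]
        ring
    _ ≤ C' * ((1 / Real.pi + 2 / δ) * ‖sinPiDiv (y * I)‖) * Real.exp (-(δ * |y|)) := by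
        gcongr
        exact exp_mul_abs_le_mul_norm_sinPiDiv_mul_I hδ y
    _ = ‖sinPiDiv (y * I)‖ * (C' * (1 / Real.pi + 2 / δ) * Real.exp (-(δ * |y|))) := by ring

theorem carlson_theorem_general [CompleteSpace E] (hf : DiffContOnCl ℂ f {z | 0 < z.re})
    (hα : 0 ≤ α) (hβπ : β < Real.pi)
    (hgrowth : ∀ z : ℂ, 0 < z.re → ‖f z‖ ≤ C * Real.exp (α * ‖z‖))
    (him : ∀ y : ℝ, ‖f (y * I)‖ ≤ C' * Real.exp (β * |y|))
    (hzero : ∀ n : ℕ, 0 < n → f n = 0) :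
    EqOn f 0 {z | 0 ≤ z.re} := by
  set b : ℂ → ℝ := fun z ↦ C * Real.exp (2 * α) * Real.exp ((α + 1) * ‖z‖)
  have hfb (z : ℂ) (hz : 0 < z.re) : ‖f z‖ ≤ b z * ‖sinPiDiv z‖ :=
    norm_le_mul_norm_sinPiDiv hf.differentiableOn hα hgrowth hzero hz
  have hb : Continuous b := by fun_prop
  have hopen : IsOpen {z : ℂ | 0 < z.re} := isOpen_lt continuous_const continuous_re
  have hF := diffContOnCl_extendedQuotient_sinPiDiv hf hb hfb
  have hFb (z : ℂ) (hz : 0 < z.re) : ‖extendedQuotient f sinPiDiv z‖ ≤ b z :=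
    norm_extendedQuotient_le (hF.differentiableAt hopen hz).continuousAt hb.continuousAt
      (eventually_sinPiDiv_ne_zero z)
      (nhdsWithin_le_nhds (mem_of_superset (hopen.mem_nhds hz) hfb))
  have hF0 : EqOn (extendedQuotient f sinPiDiv) 0 {z | 0 ≤ z.re} :=
    eqOn_zero_of_exponential_decay_on_imaginary_axis hF hFb (half_pos (sub_pos.2 hβπ))
      (norm_extendedQuotient_sinPiDiv_mul_I_le hβπ him)
  have hf0 : EqOn f 0 {z | 0 < z.re} := by
    intro z hz
    by_cases hs : sinPiDiv z = 0
    · simpa [hs] using hfb z hz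
    · have hquot : (sinPiDiv z)⁻¹ • f z = 0 :=
        (extendedQuotient_of_ne_zero hs).symm.trans (hF0 (show 0 ≤ z.re from le_of_lt hz))
      exact (smul_eq_zero.1 hquot).resolve_left (inv_ne_zero hs)
  simpa only [closure_setOfPred_lt_re] using
    hf0.of_subset_closure hf.continuousOn continuousOn_const subset_closure subset_rfl

end Carlson

/-- Carlson's theorem. -/
theorem carlson_theorem (f : ℂ → ℂ) (hf : Differentiable ℂ f)
    (C C' α β : ℝ) (hC : 0 ≤ C) (hC' : 0 ≤ C') (hα : 0 ≤ α) (hβ : 0 ≤ β)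
    (hβπ : β < Real.pi)
    (hgrowth : ∀ z : ℂ, ‖f z‖ ≤ C * Real.exp (α * ‖z‖))
    (hgrowth_im : ∀ y : ℝ, ‖f (Complex.I * y)‖ ≤ C' * Real.exp (β * |y|))
    (hzero : ∀ n : ℕ, 0 < n → f n = 0) :
    ∀ z : ℂ, f z = 0 := by
  have hhalf : EqOn f 0 {z | 0 ≤ z.re} :=
    carlson_theorem_general hf.diffContOnCl hα hβπ (fun z _ ↦ hgrowth z)
      (fun y ↦ mul_comm I (y : ℂ) ▸ hgrowth_im y) hzero
  have hnear : f =ᶠ[𝓝 1] 0 := by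
    filter_upwards [continuous_re.continuousAt.eventually_const_lt
      (show (0 : ℝ) < (1 : ℂ).re by simp)] with z hz using hhalf hz.le
  have hf0 : f = 0 := AnalyticOnNhd.eq_of_eventuallyEq (fun z _ ↦ hf.analyticAt z)
    analyticOnNhd_const hnear
  exact congrFun hf0
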